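/- arXiv:2103.14109 — 3 statements merged into one kernel-verified Lean document; each statement's English description precedes it below -/
import Mathlib

section
/- The improper integral of 1/√(1+t⁴) over t ∈ (0, ∞) equals Γ(1/4)²/(4√π), where Γ is the Gamma function. -/
/-!
Write `(1 + t⁴)^(-1/2) = Γ(1/2)⁻¹ ∫₀^∞ x^(-1/2) e^{-(1 + t⁴) x} dx` and exchange the order of
integration. The `t`-integral of `e^{-x t⁴}` is `x^(-1/4) Γ(1/4) / 4`, so what remains is
`Γ(1/4) / 4 · ∫₀^∞ x^(-3/4) e^{-x} dx = Γ(1/4)² / 4`, and `Γ(1/2) = √π`.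
-/

open Real MeasureTheory

/-- Integrand of the double integral: integrating out `x` gives `√π / √(1 + t⁴)`, integrating
out `t` gives a multiple of the integrand of `Γ(1/4)`. -/
noncomputable def gammaKernel (t x : ℝ) : ℝ :=
  x ^ (-(1 / 2) : ℝ) * exp (-((1 + t ^ 4) * x))

lemma gammaKernel_eq_mul (t x : ℝ) :
    gammaKernel t x = x ^ (-(1 / 2) : ℝ) * exp (-x) * exp (-x * t ^ (4 : ℝ)) := by
  have h4 : t ^ (4 : ℝ) = t ^ 4 := by exact_mod_cast rpow_natCast t 4
  rw [gammaKernel, h4, mul_assoc, ← exp_add]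
  ring_nf

lemma integral_gammaKernel_right (t : ℝ) :
    ∫ x in Set.Ioi (0 : ℝ), gammaKernel t x = √π * (1 / √(1 + t ^ 4)) := by
  have hb : 0 < 1 + t ^ 4 := by positivity
  have h := integral_rpow_mul_exp_neg_mul_Ioi (a := 1 / 2) (by norm_num) hb
  rw [Gamma_one_half_eq, ← sqrt_eq_rpow, sqrt_div zero_le_one, sqrt_one] at h
  rw [mul_comm, ← h]
  norm_num [gammaKernel]

lemma integral_exp_neg_mul_rpow_four {x : ℝ} (hx : 0 < x) :
    ∫ t in Set.Ioi (0 : ℝ), exp (-x * t ^ (4 : ℝ))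
      = x ^ (-(1 / 4) : ℝ) * (Gamma (1 / 4) / 4) := by
  have h := integral_rpow_mul_exp_neg_mul_rpow (p := 4) (q := 0) (by norm_num) (by norm_num) hx
  simp only [rpow_zero, one_mul, zero_add] at h
  rw [h, neg_div]
  ring

lemma integral_gammaKernel_left {x : ℝ} (hx : 0 < x) :
    ∫ t in Set.Ioi (0 : ℝ), gammaKernel t x
      = Gamma (1 / 4) / 4 * (exp (-x) * x ^ (1 / 4 - 1 : ℝ)) := by
  simp_rw [gammaKernel_eq_mul]
  rw [integral_const_mul, integral_exp_neg_mul_rpow_four hx,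
    show (1 / 4 - 1 : ℝ) = -(1 / 2) + -(1 / 4) by norm_num, rpow_add hx]
  ring

lemma gammaKernel_nonneg (t : ℝ) {x : ℝ} (hx : 0 < x) : 0 ≤ gammaKernel t x := by
  unfold gammaKernel
  positivity

lemma integrable_gammaKernel :
    Integrable (Function.uncurry gammaKernel)
      ((volume.restrict (Set.Ioi (0 : ℝ))).prod (volume.restrict (Set.Ioi (0 : ℝ)))) := by
  have hm : Measurable (Function.uncurry gammaKernel) := by
    unfold gammaKernel Function.uncurry
    fun_prop
  have hG : 0 < Gamma (1 / 4) := Gamma_pos_of_pos (by norm_num)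
  refine (integrable_prod_iff' hm.aestronglyMeasurable).2 ⟨?_, ?_⟩
  · filter_upwards [ae_restrict_mem measurableSet_Ioi] with x hx
    have hx : 0 < x := hx
    -- A function with nonzero Bochner integral is integrable.
    apply Integrable.of_integral_ne_zero
    have := integral_gammaKernel_left hx
    simp only [Function.uncurry]
    rw [this]
    positivity
  · refine ((GammaIntegral_convergent (s := 1 / 4) (by norm_num)).const_mul
      (Gamma (1 / 4) / 4)).congr ?_
    filter_upwards [ae_restrict_mem measurableSet_Ioi] with x hx
    have hx : 0 < x := hx
    rw [← integral_gammaKernel_left hx]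
    refine integral_congr_ae (.of_forall fun t => ?_)
    exact (norm_of_nonneg (gammaKernel_nonneg t hx)).symm

/-- The improper integral of `1/√(1+t⁴)` over `(0, ∞)` equals `Γ(1/4)² / (4√π)`. -/
theorem integral_one_div_sqrt_one_add_pow_four :
    ∫ t in Set.Ioi (0 : ℝ), 1 / Real.sqrt (1 + t ^ 4)
      = (Real.Gamma (1 / 4)) ^ 2 / (4 * Real.sqrt π) := by
  have hpi : 0 < √π := sqrt_pos.2 pi_pos
  have key : √π * ∫ t in Set.Ioi (0 : ℝ), 1 / √(1 + t ^ 4)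
      = Gamma (1 / 4) / 4 * Gamma (1 / 4) := by
    rw [← integral_const_mul]
    simp_rw [← integral_gammaKernel_right]
    rw [integral_integral_swap integrable_gammaKernel,
      setIntegral_congr_fun measurableSet_Ioi fun x hx => integral_gammaKernel_left hx,
      integral_const_mul, ← Gamma_eq_integral (by norm_num)]
  rw [eq_div_iff (by positivity)]
  linear_combination 4 * key
end

section
/- For all real numbers b, r with 0 ≤ b < r, the integral ∫_r^∞ dt/√(t⁴ + b⁴) equals (1/r)·∑_{n=0}^∞ [((1/4)_n · (1/2)_n)/((5/4)_n · n!)]·(−b⁴/r⁴)ⁿ, where (a)_n denotes the Pochhammer symbol (rising factorial) a(a+1)⋯(a+n−1); the series converges absolutely since |b⁴/r⁴| < 1. (This expresses the integral as (1/r)·₂F₁(1/4, 1/2; 5/4; −b⁴/r⁴).) -/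
/-!
Factoring out `t⁻²` and expanding `(1 + b⁴/t⁴)^(-1/2)` by the binomial series gives, for `t > r`,
`1/√(t⁴+b⁴) = ∑ (1/2)_n/n! · (-b⁴)ⁿ · t^(-(4n+2))`. The coefficients `(1/2)_n/n!` lie in `[0,1]`, so
the integrals over `(r, ∞)` of the absolute values of the terms are dominated by a geometric
series of ratio `b⁴/r⁴ < 1`, and the series may be integrated termwise. Integrating
`t^(-(4n+2))` produces the factor `1/(4n+1)`, which equals `(1/4)_n/(5/4)_n` by telescoping.
-/

open Real MeasureTheory

/-- The Pochhammer symbol (rising factorial): `(a)_0 = 1`, `(a)_{n+1} = (a)_n · (a + n)`. -/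
noncomputable def poch (a : ℝ) : ℕ → ℝ
  | 0 => 1
  | n + 1 => poch a n * (a + n)

lemma poch_pos {a : ℝ} (ha : 0 < a) (n : ℕ) : 0 < poch a n := by
  induction n with
  | zero => simp [poch]
  | succ n ih => rw [poch]; positivity

lemma poch_eq_ascPochhammer_eval (a : ℝ) (n : ℕ) : poch a n = (ascPochhammer ℝ n).eval a := by
  induction n with
  | zero => simp [poch]
  | succ n ih => rw [poch, ih, ascPochhammer_succ_eval]

lemma poch_quarter_div (n : ℕ) : poch (1 / 4) n / poch (5 / 4) n = 1 / (4 * n + 1) := by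
  have key : poch (1 / 4) n * (4 * n + 1) = poch (5 / 4) n := by
    induction n with
    | zero => simp [poch]
    | succ n ih => rw [poch, poch, ← ih]; push_cast; ring
  have h := poch_pos (a := 1 / 4) (by norm_num) n
  rw [← key]
  field_simp

lemma poch_half_le_factorial (n : ℕ) : poch (1 / 2) n ≤ n.factorial := by
  induction n with
  | zero => simp [poch]
  | succ n ih =>
    rw [poch, Nat.factorial_succ]
    push_cast
    rw [mul_comm ((n : ℝ) + 1)]
    have hp := poch_pos (a := 1 / 2) (by norm_num) n
    exact mul_le_mul ih (by linarith) (by positivity) (by positivity)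

lemma choose_eq_poch_div_factorial (a : ℝ) (n : ℕ) :
    Ring.choose (a + n - 1) n = poch a n / n.factorial := by
  have h : Ring.choose (a + n - 1) n = Ring.multichoose a n := by
    rw [Ring.choose]; congr 1; ring
  rw [h, eq_div_iff (by positivity), mul_comm, ← nsmul_eq_mul,
    Ring.factorial_nsmul_multichoose_eq_ascPochhammer, poch_eq_ascPochhammer_eval,
    Polynomial.ascPochhammer_smeval_eq_eval]

lemma hasSum_one_div_sqrt_one_sub {x : ℝ} (hx : |x| < 1) :
    HasSum (fun n : ℕ => poch (1 / 2) n / n.factorial * x ^ n) (1 / √(1 - x)) := by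
  have h := (one_div_one_sub_rpow_hasFPowerSeriesOnBall_zero (1 / 2)).hasSum (y := x)
    (by simpa [enorm_eq_nnnorm, ← NNReal.coe_lt_coe] using hx)
  simpa [mul_comm, FormalMultilinearSeries.ofScalars_apply_eq, choose_eq_poch_div_factorial, ← one_div,
    ← Real.sqrt_eq_rpow] using h

/-- The binomial expansion of the integrand in powers of `t`. -/
lemma hasSum_integrand {b t : ℝ} (hb : 0 ≤ b) (hbt : b < t) :
    HasSum (fun n : ℕ => poch (1 / 2) n / n.factorial * (-b ^ 4) ^ n * t ^ (-(4 * n + 2) : ℝ))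
      (1 / √(t ^ 4 + b ^ 4)) := by
  have ht : 0 < t := hb.trans_lt hbt
  have hx : |-(b ^ 4 / t ^ 4)| < 1 := by
    rw [abs_neg, abs_of_nonneg (by positivity), div_lt_one (by positivity)]
    gcongr
  have hterm (n : ℕ) :
      poch (1 / 2) n / n.factorial * (-b ^ 4) ^ n * t ^ (-(4 * n + 2) : ℝ)
        = 1 / t ^ 2 * (poch (1 / 2) n / n.factorial * (-(b ^ 4 / t ^ 4)) ^ n) := by
    have hpow : t ^ (-(4 * n + 2) : ℝ) = 1 / ((t ^ 4) ^ n * t ^ 2) := by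
      rw [show (-(4 * n + 2) : ℝ) = -((4 * n + 2 : ℕ) : ℝ) by push_cast; ring,
        Real.rpow_neg ht.le, Real.rpow_natCast, pow_add, pow_mul, one_div]
    rw [hpow, ← neg_div, div_pow]
    field_simp
  have hsqrt : 1 / √(t ^ 4 + b ^ 4) = 1 / t ^ 2 * (1 / √(1 - -(b ^ 4 / t ^ 4))) := by
    have hfactor : t ^ 4 + b ^ 4 = (t ^ 2) ^ 2 * (1 - -(b ^ 4 / t ^ 4)) := by
      field_simp
      ring
    rw [hfactor, Real.sqrt_mul (by positivity), Real.sqrt_sq (by positivity), one_div_mul_one_div]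
  simp only [hterm]
  rw [hsqrt]
  exact (hasSum_one_div_sqrt_one_sub hx).mul_left (1 / t ^ 2)

lemma integral_term {r : ℝ} (hr : 0 < r) (n : ℕ) :
    ∫ t in Set.Ioi r, t ^ (-(4 * n + 2) : ℝ) = 1 / (4 * n + 1) * (1 / r) * (1 / r ^ 4) ^ n := by
  have hn : (0 : ℝ) ≤ n := n.cast_nonneg
  rw [integral_Ioi_rpow_of_lt (by linarith) hr]
  have : r ^ (-(4 * n + 2) + 1 : ℝ) = 1 / ((r ^ 4) ^ n * r) := by
    rw [show (-(4 * n + 2) + 1 : ℝ) = -((4 * n + 1 : ℕ) : ℝ) by push_cast; ring,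
      Real.rpow_neg hr.le, Real.rpow_natCast, pow_succ, pow_mul, one_div]
  rw [this, show (-(4 * n + 2) + 1 : ℝ) = -(4 * n + 1) by ring, neg_div_neg_eq, one_div_pow]
  field_simp

/-- For `0 ≤ b < r`, the integral `∫_r^∞ dt/√(t⁴+b⁴)` equals
`(1/r) · ₂F₁(1/4, 1/2; 5/4; −b⁴/r⁴)`, given by its absolutely convergent
hypergeometric series. -/
theorem integral_eq_hypergeometric (b r : ℝ) (hb : 0 ≤ b) (hbr : b < r) :
    Summable (fun n : ℕ =>
        |poch (1 / 4) n * poch (1 / 2) n / (poch (5 / 4) n * (n.factorial : ℝ))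
          * (-(b ^ 4 / r ^ 4)) ^ n|) ∧
    ∫ t in Set.Ioi r, 1 / Real.sqrt (t ^ 4 + b ^ 4)
      = (1 / r) * ∑' n : ℕ,
          poch (1 / 4) n * poch (1 / 2) n / (poch (5 / 4) n * (n.factorial : ℝ))
            * (-(b ^ 4 / r ^ 4)) ^ n := by
  have hr : 0 < r := hb.trans_lt hbr
  have hq : b ^ 4 / r ^ 4 < 1 := by
    rw [div_lt_one (by positivity)]
    gcongr
  have hcoef (n : ℕ) : poch (1 / 4) n * poch (1 / 2) n / (poch (5 / 4) n * (n.factorial : ℝ))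
      = 1 / (4 * n + 1) * (poch (1 / 2) n / n.factorial) := by
    rw [← poch_quarter_div, div_mul_div_comm]
  have hsum : Summable (fun n : ℕ =>
      |poch (1 / 4) n * poch (1 / 2) n / (poch (5 / 4) n * (n.factorial : ℝ))
        * (-(b ^ 4 / r ^ 4)) ^ n|) := by
    refine Summable.of_nonneg_of_le (fun _ => abs_nonneg _) (fun n => ?_)
      (summable_geometric_of_lt_one (r := b ^ 4 / r ^ 4) (by positivity) hq)
    have hp := poch_pos (a := 1 / 2) (by norm_num) n
    have h1 : poch (1 / 2) n / n.factorial ≤ 1 :=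
      div_le_one_of_le₀ (poch_half_le_factorial n) (by positivity)
    have h2 : 1 / (4 * n + 1 : ℝ) ≤ 1 :=
      div_le_one_of_le₀ (by linarith [n.cast_nonneg (α := ℝ)]) (by positivity)
    rw [hcoef, abs_mul, abs_pow, abs_neg, abs_of_nonneg (by positivity : 0 ≤ b ^ 4 / r ^ 4),
      abs_of_nonneg (by positivity)]
    exact mul_le_of_le_one_left (by positivity) (mul_le_one₀ h2 (by positivity) h1)
  refine ⟨hsum, ?_⟩
  set F : ℕ → ℝ → ℝ := fun n t =>
    poch (1 / 2) n / n.factorial * (-b ^ 4) ^ n * t ^ (-(4 * n + 2) : ℝ) with hF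
  have hint (n : ℕ) : IntegrableOn (F n) (Set.Ioi r) :=
    (integrableOn_Ioi_rpow_of_lt (by linarith [n.cast_nonneg (α := ℝ)]) hr).const_mul _
  have hval (n : ℕ) : ∫ t in Set.Ioi r, F n t
      = (1 / r) * (poch (1 / 4) n * poch (1 / 2) n / (poch (5 / 4) n * (n.factorial : ℝ))
        * (-(b ^ 4 / r ^ 4)) ^ n) := by
    rw [hcoef, hF]
    simp only
    rw [integral_const_mul, integral_term hr, ← neg_div, div_pow (-b ^ 4), one_div_pow]
    ring
  -- Each term has constant sign on `(r, ∞)`, so the norm passes through the integral.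
  have hnorm (n : ℕ) : ∫ t in Set.Ioi r, ‖F n t‖ = |∫ t in Set.Ioi r, F n t| := by
    have hpos : 0 ≤ ∫ t in Set.Ioi r, t ^ (-(4 * n + 2) : ℝ) :=
      setIntegral_nonneg measurableSet_Ioi fun t ht => Real.rpow_nonneg (hr.trans ht).le _
    rw [hF]
    simp only
    rw [integral_const_mul, abs_mul, abs_of_nonneg hpos, ← integral_const_mul]
    refine setIntegral_congr_fun measurableSet_Ioi fun t ht => ?_
    rw [norm_mul, Real.norm_eq_abs, Real.norm_eq_abs,
      abs_of_nonneg (Real.rpow_nonneg (hr.trans ht).le _)]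
  have hsumF : Summable fun n => ∫ t in Set.Ioi r, ‖F n t‖ := by
    simp only [hnorm, hval, abs_mul (1 / r)]
    exact hsum.mul_left _
  have key := hasSum_integral_of_summable_integral_norm hint hsumF
  rw [← tsum_mul_left, ← tsum_congr hval, key.tsum_eq]
  exact setIntegral_congr_fun measurableSet_Ioi fun t ht =>
    (hasSum_integrand hb (hbr.trans ht)).tsum_eq.symm
end

section
/- Let β > 0 and F, G be real numbers such that U := 1 + F/β² − G²/(4β⁴) > 0. Define P := F − (F² + G²)/(U·β²), S := G, and V := 1 − P/β² − S²/(4β⁴). Then V = (1 + G²/(4β⁴))²/U. -/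
/-- In Born-Infeld electrodynamics, with `U = 1 + F/β^2 - G^2/(4β^4) > 0`,
`P = F - (F^2+G^2)/(U β^2)`, `S = G` and `V = 1 - P/β^2 - S^2/(4β^4)`, one has
`V = (1 + G^2/(4β^4))^2 / U`. -/
theorem bornInfeld_P_framework (β F G U P S V : ℝ) (hβ : 0 < β)
    (hU : U = 1 + F / β ^ 2 - G ^ 2 / (4 * β ^ 4)) (hUpos : 0 < U)
    (hP : P = F - (F ^ 2 + G ^ 2) / (U * β ^ 2)) (hS : S = G)
    (hV : V = 1 - P / β ^ 2 - S ^ 2 / (4 * β ^ 4)) :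
    V = (1 + G ^ 2 / (4 * β ^ 4)) ^ 2 / U := by
  have hβ0 : β ≠ 0 := ne_of_gt hβ
  have hU0 : U ≠ 0 := ne_of_gt hUpos
  -- With `f = F / β ^ 2` and `g = G ^ 2 / (4 * β ^ 4)`, so that `U = 1 + f - g`, the claim is
  -- `(1 - g - f) * (1 - g + f) + f ^ 2 + 4 * g = (1 + g) ^ 2`.
  have hVfg : V = 1 - F / β ^ 2 - G ^ 2 / (4 * β ^ 4)
      + ((F / β ^ 2) ^ 2 + 4 * (G ^ 2 / (4 * β ^ 4))) / U := by
    rw [hV, hP, hS]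
    field_simp
    ring
  rw [eq_div_iff hU0, hVfg, add_mul, div_mul_cancel₀ _ hU0, hU]
  ring
end
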